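/- Let L be an encoding for the degree sequence d with exactly p 2-defect edges and exactly q (−1)-defect edges, and let a_1, b_1, a_2, b_2 ∈ [n] be four distinct vertices with L(a_1, b_1) ≠ 0 and L(a_2, b_2) = 1. Define η* = η_{a_1} + η_{b_1} + η_{a_2} + η_{b_2} and ζ* = ζ_{a_1} + ζ_{b_1} + ζ_{a_2} + ζ_{b_2}. Then the number of ordered pairs of vertices (a_3, b_3) such that L(a_3, b_3) = 1, L(a_1, b_3) = L(a_3, b_2) = 0, and a_1, b_1, a_2, b_2, a_3, b_3 are all distinct is at least M − 4p + 2q − ( d_max·( 2·d_max − (ζ_{a_1} + ζ_{b_2}) + 2·(η_{a_1} + η_{b_2}) + 4 ) + η* − 2·ζ* + Σ_{x ∈ N̂_L(a_1)} (η_x − 2·ζ_x) + Σ_{y ∈ N̂_L(b_2)} (η_y − 2·ζ_y) ). -/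

import Mathlib

/-!
Let `G` be the graph of edges labelled `1`. The row sums give `deg_G v = d v - 2 ζ v + η v` and
`|N̂(v)| = d v - ζ v + 2 η v`, so by the handshake lemma `G` has `M - 4 p + 2 q` ordered edges. If
`b₃` avoids `N̂(a₁) ∪ {a₁, a₂}` and `a₃` avoids `N̂(b₂) ∪ {b₂, b₁}`, then every required
non-adjacency and distinctness holds: `b₁ ∈ N̂(a₁)` and `a₂ ∈ N̂(b₂)`, while `a₃ = a₁` would put
`b₃` in `N̂(a₁)` and `b₃ = b₂` would put `a₃` in `N̂(b₂)`. Forbidding a vertex at one end of an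
ordered edge costs at most its `G`-degree, and each degree is bounded through `d v ≤ d_max`.
-/

open scoped Classical

noncomputable section

namespace SwitchChain

variable {n : ℕ}

/-- `M d` is the sum of the degrees. -/
def M (d : Fin n → ℕ) : ℕ := ∑ j, d j

/-- The maximum degree. -/
def dmax (d : Fin n → ℕ) : ℕ := Finset.univ.sup d

/-- An encoding for the degree sequence `d`: a symmetric integer matrix with zero
diagonal, entries in `{-1, 0, 1, 2}`, and row sums `d`. -/
def IsEncoding (d : Fin n → ℕ) (L : Matrix (Fin n) (Fin n) ℤ) : Prop :=
  (∀ i j, L i j = L j i) ∧ (∀ i, L i i = 0) ∧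
  (∀ i j, L i j = -1 ∨ L i j = 0 ∨ L i j = 1 ∨ L i j = 2) ∧
  (∀ i, ∑ j, L i j = (d i : ℤ))

/-- The set of (unordered) edges of `L` carrying the label `c`. -/
def labelEdges (L : Matrix (Fin n) (Fin n) ℤ) (c : ℤ) : Set (Sym2 (Fin n)) :=
  {e | ∃ x y : Fin n, e = s(x, y) ∧ x ≠ y ∧ L x y = c}

/-- `N̂_L(v)`: all neighbours of `v` (along edges with nonzero label). -/
def nbrHat (L : Matrix (Fin n) (Fin n) ℤ) (v : Fin n) : Set (Fin n) :=
  {w | w ≠ v ∧ L v w ≠ 0}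

/-- `ζ_v`: the number of 2-defect edges incident with `v`. -/
def zeta (L : Matrix (Fin n) (Fin n) ℤ) (v : Fin n) : ℕ :=
  {w | w ≠ v ∧ L v w = 2}.ncard

/-- `η_v`: the number of (−1)-defect edges incident with `v`. -/
def eta (L : Matrix (Fin n) (Fin n) ℤ) (v : Fin n) : ℕ :=
  {w | w ≠ v ∧ L v w = -1}.ncard

lemma sum_insert_le_add_sum {ι R : Type*} [DecidableEq ι] [AddCommMonoid R] [PartialOrder R]
    [CanonicallyOrderedAdd R] (a : ι) (s : Finset ι) (f : ι → R) :
    ∑ x ∈ insert a s, f x ≤ f a + ∑ x ∈ s, f x := by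
  by_cases ha : a ∈ s
  · rw [Finset.insert_eq_of_mem ha]
    exact le_add_self
  · rw [Finset.sum_insert ha]

section Graph

variable {V : Type*} [Fintype V] (G : SimpleGraph V) [DecidableRel G.Adj]

lemma card_interedges_univ_right (s : Finset V) :
    (G.interedges s Finset.univ).card = ∑ v ∈ s, G.degree v := by
  simp only [G.interedges_def, Finset.card_filter, Finset.sum_product,
    ← G.card_neighborFinset_eq_degree, G.neighborFinset_eq_filter]

lemma card_interedges_univ_left (s : Finset V) :
    (G.interedges Finset.univ s).card = ∑ v ∈ s, G.degree v := by
  have : Std.Symm G.Adj := G.symm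
  rw [← card_interedges_univ_right]
  exact Rel.card_interedges_comm _ _

lemma sum_degrees_le_card_interedges_compl [DecidableEq V] (s t : Finset V) :
    ∑ v, G.degree v ≤
      (G.interedges sᶜ tᶜ).card + ∑ v ∈ s, G.degree v + ∑ v ∈ t, G.degree v := by
  have hcover : G.interedges Finset.univ Finset.univ ⊆
      G.interedges sᶜ tᶜ ∪ G.interedges s Finset.univ ∪ G.interedges Finset.univ t := by
    intro e
    simp only [Finset.mem_union, G.mem_interedges_iff, Finset.mem_compl, Finset.mem_univ]
    tauto
  calc ∑ v, G.degree v
      = (G.interedges Finset.univ Finset.univ).card := (card_interedges_univ_right G _).symm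
    _ ≤ (G.interedges sᶜ tᶜ ∪ G.interedges s Finset.univ ∪ G.interedges Finset.univ t).card :=
        Finset.card_le_card hcover
    _ ≤ (G.interedges sᶜ tᶜ).card + (G.interedges s Finset.univ).card +
          (G.interedges Finset.univ t).card := by
        grw [Finset.card_union_le, Finset.card_union_le]
    _ = (G.interedges sᶜ tᶜ).card + ∑ v ∈ s, G.degree v + ∑ v ∈ t, G.degree v := by
        rw [card_interedges_univ_right, card_interedges_univ_left]

end Graph

/-- The graph of edges of `L` carrying the label `c`. Symmetrizing through `SimpleGraph.fromRel`
makes it a simple graph for every matrix; encodings are symmetric, so nothing is added for them. -/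
def labelGraph {V R : Type*} (L : Matrix V V R) (c : R) : SimpleGraph V :=
  SimpleGraph.fromRel fun v w ↦ L v w = c

lemma edgeSet_labelGraph (L : Matrix (Fin n) (Fin n) ℤ) (c : ℤ) :
    (labelGraph L c).edgeSet = labelEdges L c := by
  ext e
  induction e using Sym2.ind with
  | _ x y =>
    simp only [labelGraph, SimpleGraph.mem_edgeSet, SimpleGraph.fromRel_adj, labelEdges,
      Set.mem_ofPred_eq]
    constructor
    · rintro ⟨hxy, h | h⟩
      · exact ⟨x, y, rfl, hxy, h⟩
      · exact ⟨y, x, Sym2.eq_swap, hxy.symm, h⟩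
    · rintro ⟨a, b, hab, hne, h⟩
      obtain ⟨rfl, rfl⟩ | ⟨rfl, rfl⟩ := Sym2.eq_iff.mp hab
      · exact ⟨hne, .inl h⟩
      · exact ⟨hne.symm, .inr h⟩

lemma sum_degree_labelGraph (L : Matrix (Fin n) (Fin n) ℤ) (c : ℤ) :
    ∑ v, (labelGraph L c).degree v = 2 * (labelEdges L c).ncard := by
  rw [SimpleGraph.sum_degrees_eq_twice_card_edges, ← edgeSet_labelGraph,
    ← SimpleGraph.coe_edgeFinset, Set.ncard_coe_finset]

lemma le_dmax (d : Fin n → ℕ) (v : Fin n) : d v ≤ dmax d :=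
  Finset.le_sup (Finset.mem_univ v)

/-- The ordered pairs `(a₃, b₃)` that may serve as third edge for `a₁b₁` and `a₂b₂`. -/
def thirdEdges (L : Matrix (Fin n) (Fin n) ℤ) (a1 b1 a2 b2 : Fin n) : Set (Fin n × Fin n) :=
  {ab | L ab.1 ab.2 = 1 ∧ L a1 ab.2 = 0 ∧ L ab.1 b2 = 0 ∧
    ab.1 ≠ a1 ∧ ab.1 ≠ b1 ∧ ab.1 ≠ a2 ∧ ab.1 ≠ b2 ∧
    ab.2 ≠ a1 ∧ ab.2 ≠ b1 ∧ ab.2 ≠ a2 ∧ ab.2 ≠ b2 ∧ ab.1 ≠ ab.2}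

namespace IsEncoding

variable {d : Fin n → ℕ} {L : Matrix (Fin n) (Fin n) ℤ}

lemma apply_comm (hL : IsEncoding d L) (v w : Fin n) : L v w = L w v :=
  hL.1 v w

lemma ne_of_apply_ne_zero (hL : IsEncoding d L) {v w : Fin n} (h : L v w ≠ 0) : v ≠ w := by
  rintro rfl
  exact h (hL.2.1 v)

lemma mem_nbrHat_iff (hL : IsEncoding d L) {v w : Fin n} : w ∈ nbrHat L v ↔ L v w ≠ 0 :=
  and_iff_right_of_imp fun h ↦ (hL.ne_of_apply_ne_zero h).symm

lemma labelGraph_adj (hL : IsEncoding d L) {c : ℤ} (hc : c ≠ 0) {v w : Fin n} :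
    (labelGraph L c).Adj v w ↔ L v w = c := by
  rw [labelGraph, SimpleGraph.fromRel_adj, hL.apply_comm w v, or_self]
  exact and_iff_right_of_imp fun h ↦ hL.ne_of_apply_ne_zero (h.trans_ne hc)

lemma degree_labelGraph (hL : IsEncoding d L) {c : ℤ} (hc : c ≠ 0) (v : Fin n) :
    (labelGraph L c).degree v = (Finset.univ.filter (L v · = c)).card := by
  rw [← SimpleGraph.card_neighborFinset_eq_degree, SimpleGraph.neighborFinset_eq_filter]
  simp only [hL.labelGraph_adj hc]

lemma ncard_row_eq_degree (hL : IsEncoding d L) {c : ℤ} (hc : c ≠ 0) (v : Fin n) :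
    {w | w ≠ v ∧ L v w = c}.ncard = (labelGraph L c).degree v := by
  rw [hL.degree_labelGraph hc, ← Set.ncard_coe_finset, Finset.coe_filter_univ]
  congr 1 with w
  exact and_iff_right_of_imp fun h ↦ (hL.ne_of_apply_ne_zero (h.trans_ne hc)).symm

lemma zeta_eq_degree (hL : IsEncoding d L) (v : Fin n) : zeta L v = (labelGraph L 2).degree v :=
  hL.ncard_row_eq_degree two_ne_zero v

lemma eta_eq_degree (hL : IsEncoding d L) (v : Fin n) : eta L v = (labelGraph L (-1)).degree v :=
  hL.ncard_row_eq_degree (by decide) v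

lemma sum_comp_row (hL : IsEncoding d L) (v : Fin n) (f : ℤ → ℤ) (hf : f 0 = 0) :
    ∑ w, f (L v w) = f 1 * (labelGraph L 1).degree v + f 2 * zeta L v + f (-1) * eta L v := by
  rw [hL.zeta_eq_degree, hL.eta_eq_degree, hL.degree_labelGraph one_ne_zero,
    hL.degree_labelGraph two_ne_zero, hL.degree_labelGraph (by decide : (-1 : ℤ) ≠ 0)]
  simp only [← Finset.sum_boole, Finset.mul_sum, ← Finset.sum_add_distrib]
  refine Finset.sum_congr rfl fun w _ ↦ ?_
  rcases hL.2.2.1 v w with h | h | h | h <;> simp [h, hf]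

lemma degree_labelGraph_one (hL : IsEncoding d L) (v : Fin n) :
    ((labelGraph L 1).degree v : ℤ) = d v - 2 * zeta L v + eta L v := by
  have hrow := hL.sum_comp_row v id rfl
  simp only [id, hL.2.2.2 v] at hrow
  linarith

lemma card_nbrHat (hL : IsEncoding d L) (v : Fin n) :
    ((Finset.univ.filter (· ∈ nbrHat L v)).card : ℤ) = d v - zeta L v + 2 * eta L v := by
  have hlabels : ((Finset.univ.filter (· ∈ nbrHat L v)).card : ℤ) =
      (labelGraph L 1).degree v + zeta L v + eta L v := by
    simpa [hL.mem_nbrHat_iff, Finset.card_filter] using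
      hL.sum_comp_row v (fun c ↦ if c ≠ 0 then 1 else 0) (by simp)
  rw [hlabels, hL.degree_labelGraph_one]
  ring

lemma sum_degree_labelGraph_one (hL : IsEncoding d L) :
    ∑ v, ((labelGraph L 1).degree v : ℤ) =
      M d - 4 * (labelEdges L 2).ncard + 2 * (labelEdges L (-1)).ncard := by
  have hzeta : ∑ v, (zeta L v : ℤ) = 2 * (labelEdges L 2).ncard := by
    simp only [hL.zeta_eq_degree]
    exact_mod_cast sum_degree_labelGraph L 2
  have heta : ∑ v, (eta L v : ℤ) = 2 * (labelEdges L (-1)).ncard := by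
    simp only [hL.eta_eq_degree]
    exact_mod_cast sum_degree_labelGraph L (-1)
  push_cast [M]
  simp only [hL.degree_labelGraph_one, Finset.sum_add_distrib, Finset.sum_sub_distrib,
    ← Finset.mul_sum, hzeta, heta]
  ring

lemma degree_labelGraph_one_le (hL : IsEncoding d L) (v : Fin n) :
    ((labelGraph L 1).degree v : ℤ) ≤ dmax d + (eta L v - 2 * zeta L v) := by
  have hdeg := hL.degree_labelGraph_one v
  have hd : (d v : ℤ) ≤ dmax d := mod_cast le_dmax d v
  linarith

lemma sum_nbrHat_degree_le (hL : IsEncoding d L) (v : Fin n) :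
    ∑ x ∈ Finset.univ.filter (· ∈ nbrHat L v), ((labelGraph L 1).degree x : ℤ) ≤
      dmax d * (dmax d - zeta L v + 2 * eta L v) +
        ∑ x ∈ Finset.univ.filter (· ∈ nbrHat L v), ((eta L x : ℤ) - 2 * zeta L x) := by
  have hd : (d v : ℤ) ≤ dmax d := mod_cast le_dmax d v
  have hcard : ((Finset.univ.filter (· ∈ nbrHat L v)).card : ℤ) ≤
      dmax d - zeta L v + 2 * eta L v := by
    rw [hL.card_nbrHat]
    gcongr
  calc ∑ x ∈ Finset.univ.filter (· ∈ nbrHat L v), ((labelGraph L 1).degree x : ℤ)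
      ≤ ∑ x ∈ Finset.univ.filter (· ∈ nbrHat L v), (dmax d + ((eta L x : ℤ) - 2 * zeta L x)) :=
        Finset.sum_le_sum fun x _ ↦ hL.degree_labelGraph_one_le x
    _ = dmax d * (Finset.univ.filter (· ∈ nbrHat L v)).card +
          ∑ x ∈ Finset.univ.filter (· ∈ nbrHat L v), ((eta L x : ℤ) - 2 * zeta L x) := by
        rw [Finset.sum_add_distrib, Finset.sum_const, nsmul_eq_mul, mul_comm]
    _ ≤ dmax d * (dmax d - zeta L v + 2 * eta L v) +
          ∑ x ∈ Finset.univ.filter (· ∈ nbrHat L v), ((eta L x : ℤ) - 2 * zeta L x) := by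
        gcongr

lemma sum_insert_insert_nbrHat_degree_le (hL : IsEncoding d L) (v x y : Fin n) :
    ∑ u ∈ insert x (insert y (Finset.univ.filter (· ∈ nbrHat L v))),
        ((labelGraph L 1).degree u : ℤ) ≤
      dmax d * (dmax d - zeta L v + 2 * eta L v + 2) +
        ((eta L x - 2 * zeta L x) + (eta L y - 2 * zeta L y) +
          ∑ u ∈ Finset.univ.filter (· ∈ nbrHat L v), ((eta L u : ℤ) - 2 * zeta L u)) := by
  have hinsert := (sum_insert_le_add_sum x _ fun u ↦ (labelGraph L 1).degree u).trans <|
    Nat.add_le_add_left (sum_insert_le_add_sum y (Finset.univ.filter (· ∈ nbrHat L v)) _) _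
  have hx := hL.degree_labelGraph_one_le x
  have hy := hL.degree_labelGraph_one_le y
  have hnbr := hL.sum_nbrHat_degree_le v
  zify at hinsert
  linarith

lemma interedges_subset_thirdEdges (hL : IsEncoding d L) {a1 b1 a2 b2 : Fin n}
    (h1 : L a1 b1 ≠ 0) (h2 : L a2 b2 ≠ 0) :
    ((labelGraph L 1).interedges (insert b1 (insert b2 (Finset.univ.filter (· ∈ nbrHat L b2))))ᶜ
      (insert a1 (insert a2 (Finset.univ.filter (· ∈ nbrHat L a1))))ᶜ : Set (Fin n × Fin n)) ⊆
      thirdEdges L a1 b1 a2 b2 := by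
  rintro ⟨a, b⟩ hab
  simp only [SetLike.mem_coe, SimpleGraph.mem_interedges_iff, Finset.mem_compl, Finset.mem_insert,
    Finset.mem_filter_univ, hL.mem_nbrHat_iff, hL.labelGraph_adj one_ne_zero, hL.apply_comm b2 a,
    not_or, not_not] at hab
  obtain ⟨⟨hab1, hab2, ha⟩, ⟨hba1, hba2, hb⟩, hone⟩ := hab
  have hne : L a b ≠ 0 := hone.trans_ne one_ne_zero
  refine ⟨hone, hb, ha, ?_, hab1, ?_, hab2, hba1, ?_, hba2, ?_, hL.ne_of_apply_ne_zero hne⟩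
  · rintro rfl; exact hne hb
  · rintro rfl; exact h2 ha
  · rintro rfl; exact h1 hb
  · rintro rfl; exact hne ha

end IsEncoding

theorem choose_third_edge_lower_bound_general {d : Fin n → ℕ} {L : Matrix (Fin n) (Fin n) ℤ}
    (hL : IsEncoding d L) {a1 b1 a2 b2 : Fin n} (hL1 : L a1 b1 ≠ 0) (hL2 : L a2 b2 ≠ 0) :
    (M d : ℤ) - 4 * (labelEdges L 2).ncard + 2 * (labelEdges L (-1)).ncard -
        ((dmax d : ℤ) *
            (2 * (dmax d : ℤ) - ((zeta L a1 : ℤ) + zeta L b2)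
              + 2 * ((eta L a1 : ℤ) + eta L b2) + 4)
          + ((eta L a1 : ℤ) + eta L b1 + eta L a2 + eta L b2)
          - 2 * ((zeta L a1 : ℤ) + zeta L b1 + zeta L a2 + zeta L b2)
          + ∑ x ∈ Finset.univ.filter (· ∈ nbrHat L a1), ((eta L x : ℤ) - 2 * zeta L x)
          + ∑ y ∈ Finset.univ.filter (· ∈ nbrHat L b2), ((eta L y : ℤ) - 2 * zeta L y)) ≤
      (thirdEdges L a1 b1 a2 b2).ncard := by
  have hcount := sum_degrees_le_card_interedges_compl (labelGraph L 1)
    (insert b1 (insert b2 (Finset.univ.filter (· ∈ nbrHat L b2))))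
    (insert a1 (insert a2 (Finset.univ.filter (· ∈ nbrHat L a1))))
  have hsubset := Set.ncard_le_ncard (hL.interedges_subset_thirdEdges hL1 hL2)
  rw [Set.ncard_coe_finset] at hsubset
  have hleft := hL.sum_insert_insert_nbrHat_degree_le b2 b1 b2
  have hright := hL.sum_insert_insert_nbrHat_degree_le a1 a1 a2
  have htotal := hL.sum_degree_labelGraph_one
  zify at hcount hsubset
  linarith

/-- Lower bound on the number of ordered pairs `(a₃, b₃)` with `L(a₃,b₃) = 1`,
`L(a₁,b₃) = L(a₃,b₂) = 0` and `a₁, b₁, a₂, b₂, a₃, b₃` all distinct. -/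
theorem choose_third_edge_lower_bound
    (d : Fin n → ℕ) (L : Matrix (Fin n) (Fin n) ℤ) (hL : IsEncoding d L)
    (p q : ℕ)
    (hp : (labelEdges L 2).ncard = p)
    (hq : (labelEdges L (-1)).ncard = q)
    (a1 b1 a2 b2 : Fin n)
    (hdist : a1 ≠ b1 ∧ a1 ≠ a2 ∧ a1 ≠ b2 ∧ b1 ≠ a2 ∧ b1 ≠ b2 ∧ a2 ≠ b2)
    (hL1 : L a1 b1 ≠ 0) (hL2 : L a2 b2 = 1) :
    (M d : ℤ) - 4 * p + 2 * q -
        ((dmax d : ℤ) *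
            (2 * (dmax d : ℤ) - ((zeta L a1 : ℤ) + zeta L b2)
              + 2 * ((eta L a1 : ℤ) + eta L b2) + 4)
          + ((eta L a1 : ℤ) + eta L b1 + eta L a2 + eta L b2)
          - 2 * ((zeta L a1 : ℤ) + zeta L b1 + zeta L a2 + zeta L b2)
          + ∑ x ∈ Finset.univ.filter (· ∈ nbrHat L a1),
              ((eta L x : ℤ) - 2 * zeta L x)
          + ∑ y ∈ Finset.univ.filter (· ∈ nbrHat L b2),
              ((eta L y : ℤ) - 2 * zeta L y)) ≤
      ({ab : Fin n × Fin n |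
          L ab.1 ab.2 = 1 ∧ L a1 ab.2 = 0 ∧ L ab.1 b2 = 0 ∧
          ab.1 ≠ a1 ∧ ab.1 ≠ b1 ∧ ab.1 ≠ a2 ∧ ab.1 ≠ b2 ∧
          ab.2 ≠ a1 ∧ ab.2 ≠ b1 ∧ ab.2 ≠ a2 ∧ ab.2 ≠ b2 ∧ ab.1 ≠ ab.2}.ncard : ℤ) := by
  subst hp hq
  exact choose_third_edge_lower_bound_general hL hL1 (by simp [hL2])

end SwitchChain
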